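/- arXiv:1812.07566 — 4 statements merged into one kernel-verified Lean document; each statement's English description precedes it below -/
import Mathlib

section
/- Let μ be a Borel measure on ℝ which is finite on compact sets and satisfies μ((−∞,0)) = 0. Let h : ℝ × ℝ → ℝ be a bounded Borel function, and let H : ℝ × ℝ → ℝ be a Borel function with a ↦ H(0,a) locally bounded, satisfying H(t,a) − H(s,a) = ∫_{[s,t)} h(u,a) dμ(u) for all s ≤ t and all a ∈ ℝ. Let ρ : ℝ → ℝ be a continuous function with compact support, and for m,n ∈ ℕ define the mollification H^{m,n}(t,a) = ∫_ℝ ∫_ℝ m n H(r,q) ρ(m(t−r)) ρ(n(a−q)) dr dq. Then for all 0 ≤ s ≤ t and all a ∈ ℝ, H^{m,n}(t,a) − H^{m,n}(s,a) = ∫_s^t Φ^{m,n}(u,a) du, where Φ^{m,n}(u,a) = ∫_ℝ ∫_ℝ m n h(r,q) ρ(m(u−r)) ρ(n(a−q)) dμ(r) dq. -/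
open MeasureTheory Set intervalIntegral

lemma aux_int {X : Type*} [MeasurableSpace X] (ν : Measure X) (f : X → ℝ) (hf : Measurable f)
    (S : Set X) (hfin : ν S < ⊤) (C : ℝ)
    (hC : ∀ x ∈ S, |f x| ≤ C) (h0 : ∀ x, x ∉ S → f x = 0) : Integrable f ν := by
  have hS' : Function.support f ⊆ S := fun x hx => by
    by_contra hh
    exact hx (h0 x hh)
  have hm : MeasurableSet (Function.support f) := measurableSet_support hf
  rw [← integrableOn_iff_integrable_of_support_subset (subset_refl (Function.support f))]
  refine Measure.integrableOn_of_bounded (M := C) (lt_of_le_of_lt (measure_mono hS') hfin).ne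
    hf.aestronglyMeasurable ?_
  filter_upwards [ae_restrict_mem hm] with x hx
  exact hC x (hS' hx)

lemma aux_intOn {X : Type*} [MeasurableSpace X] (ν : Measure X) (f : X → ℝ) (hf : Measurable f)
    (S T : Set X) (hT : MeasurableSet T) (hfin : ν S < ⊤) (C : ℝ)
    (hC : ∀ x, |f x| ≤ C) (h0 : ∀ x ∈ T, x ∉ S → f x = 0) : IntegrableOn f T ν := by
  rw [← integrable_indicator_iff hT]
  refine aux_int ν _ (hf.indicator hT) S hfin C ?_ ?_
  · intro x _
    by_cases hx : x ∈ T
    · simpa [hx] using hC x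
    · simpa [hx] using (abs_nonneg _).trans (hC x)
  · intro x hx
    by_cases hxT : x ∈ T
    · simpa [hxT] using h0 x hxT hx
    · simp [hxT]

lemma aux_bdd (μ : Measure ℝ) [IsFiniteMeasureOnCompacts μ] (g G : ℝ → ℝ) (M : ℝ)
    (hg : ∀ x, |g x| ≤ M)
    (hd : ∀ s t : ℝ, s ≤ t → G t - G s = ∫ u in Set.Ico s t, g u ∂μ)
    (R r : ℝ) (hr : |r| ≤ R) : |G r| ≤ |G 0| + M * μ.real (Icc (-R) R) := by
  have hM : 0 ≤ M := (abs_nonneg _).trans (hg 0)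
  have hr' := abs_le.1 hr
  have key : ∀ s t : ℝ, s ≤ t → -R ≤ s → t ≤ R → |G t - G s| ≤ M * μ.real (Icc (-R) R) := by
    intro s t hst h1 h2
    have hsub : Ico s t ⊆ Icc (-R) R := fun x hx => ⟨h1.trans hx.1, hx.2.le.trans h2⟩
    have hlt : μ (Icc (-R) R) < ⊤ := isCompact_Icc.measure_lt_top
    rw [hd s t hst]
    have := norm_setIntegral_le_of_norm_le_const (μ := μ) (f := g) (s := Ico s t) (C := M)
      (lt_of_le_of_lt (measure_mono hsub) hlt) (fun x _ => hg x)
    refine this.trans ?_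
    exact mul_le_mul_of_nonneg_left (measureReal_mono hsub hlt.ne) hM
  have : |G r - G 0| ≤ M * μ.real (Icc (-R) R) := by
    rcases le_total 0 r with h | h
    · exact key 0 r h (by linarith [abs_nonneg r]) hr'.2
    · rw [abs_sub_comm]
      exact key r 0 h hr'.1 (by linarith [abs_nonneg r])
  have h2 := abs_sub_abs_le_abs_sub (G r) (G 0)
  linarith

lemma aux_one (μ : Measure ℝ) [IsFiniteMeasureOnCompacts μ] (g G : ℝ → ℝ) (M : ℝ)
    (hgm : Measurable g) (hGm : Measurable G) (hg : ∀ x, |g x| ≤ M)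
    (hd : ∀ s t : ℝ, s ≤ t → G t - G s = ∫ u in Set.Ico s t, g u ∂μ)
    (k : ℝ → ℝ) (hk : Continuous k) (B R : ℝ) (hB : ∀ x, |k x| ≤ B)
    (hR : ∀ x, R < |x| → k x = 0) (s t : ℝ) (hst : s ≤ t) :
    (∫ r, G r * k (t - r)) - (∫ r, G r * k (s - r)) = ∫ u in s..t, ∫ r, g r * k (u - r) ∂μ := by
  have hM : 0 ≤ M := (abs_nonneg _).trans (hg 0)
  have hB0 : 0 ≤ B := (abs_nonneg _).trans (hB 0)
  have hkm := hk.measurable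
  have hI : ∀ t, Integrable (fun x => G (t - x) * k x) := by
    intro t
    refine aux_int _ _ (by fun_prop) (Icc (-R) R) isCompact_Icc.measure_lt_top
      ((|G 0| + M * μ.real (Icc (-(|t|+R)) (|t|+R))) * B) ?_ ?_
    · intro x hx
      rw [abs_mul]
      refine mul_le_mul (aux_bdd μ g G M hg hd _ _ ?_) (hB x) (abs_nonneg _) (by positivity)
      have := abs_le.2 hx
      have := abs_sub t x
      linarith
    · intro x hx
      rw [hR x, mul_zero]
      by_contra hh
      exact hx (abs_le.1 (not_lt.1 hh))
  have e : ∀ t, (∫ r, G r * k (t - r)) = ∫ x, G (t - x) * k x := by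
    intro t
    rw [← integral_sub_left_eq_self (fun r => G r * k (t - r)) volume t]
    simp
  rw [e, e, ← MeasureTheory.integral_sub (hI t) (hI s)]
  have e1 : ∀ x, G (t - x) * k x - G (s - x) * k x
      = ∫ r, (Ico s t).indicator (fun _ => g r * k x) (r + x) ∂μ := by
    intro x
    rw [← sub_mul, hd _ _ (by linarith), ← MeasureTheory.integral_mul_const,
      ← MeasureTheory.integral_indicator measurableSet_Ico]
    congr 1
    ext r
    simp only [indicator, mem_Ico, sub_le_iff_le_add, lt_sub_iff_add_lt]
  simp_rw [e1]
  rw [integral_integral_swap]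
  · have e2 : ∀ r, (∫ x, (Ico s t).indicator (fun _ => g r * k x) (r + x))
        = ∫ u in Ioc s t, g r * k (u - r) := by
      intro r
      rw [← integral_Ico_eq_integral_Ioc, ← MeasureTheory.integral_indicator measurableSet_Ico,
        ← integral_add_left_eq_self ((Ico s t).indicator fun u => g r * k (u - r)) r]
      congr 1
      ext x
      simp [indicator]
    simp_rw [e2]
    rw [intervalIntegral.integral_of_le hst, integral_integral_swap]
    have := aux_intOn (μ.prod volume) (fun p : ℝ × ℝ => g p.1 * k (p.2 - p.1)) (by fun_prop)
      ((Icc (s-R) (t+R)) ×ˢ Ioc s t) (univ ×ˢ Ioc s t) (MeasurableSet.univ.prod measurableSet_Ioc)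
      ?_ (M * B) ?_ ?_
    · rw [IntegrableOn, ← Measure.prod_restrict, Measure.restrict_univ] at this
      exact this
    · rw [Measure.prod_prod]
      exact ENNReal.mul_lt_top isCompact_Icc.measure_lt_top measure_Ioc_lt_top
    · intro x
      rw [abs_mul]
      exact mul_le_mul (hg _) (hB _) (abs_nonneg _) hM
    · rintro ⟨r, u⟩ ⟨-, hu⟩ hx
      simp only at hu ⊢
      rw [hR, mul_zero]
      by_contra hh
      have := abs_le.1 (not_lt.1 hh)
      exact hx ⟨⟨by linarith [hu.1, this.2], by linarith [hu.2, this.1]⟩, hu⟩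
  · have : (Function.uncurry fun x r => (Ico s t).indicator (fun _ => g r * k x) (r + x))
        = ((fun p : ℝ × ℝ => p.2 + p.1) ⁻¹' Ico s t).indicator (fun p => g p.2 * k p.1) := by
      ext ⟨x, r⟩
      simp [indicator]
    rw [this, integrable_indicator_iff (measurableSet_Ico.preimage (by fun_prop))]
    refine aux_intOn _ _ (by fun_prop) (Icc (-R) R ×ˢ Icc (s-R) (t+R)) _
      (measurableSet_Ico.preimage (by fun_prop)) ?_ (M * B) ?_ ?_
    · rw [Measure.prod_prod]
      exact ENNReal.mul_lt_top isCompact_Icc.measure_lt_top isCompact_Icc.measure_lt_top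
    · intro x
      rw [abs_mul]
      exact mul_le_mul (hg _) (hB _) (abs_nonneg _) hM
    · rintro ⟨x, r⟩ hu hx
      simp only [mem_preimage, mem_Ico] at hu ⊢
      rw [hR, mul_zero]
      by_contra hh
      have := abs_le.1 (not_lt.1 hh)
      exact hx ⟨this, by linarith [hu.1, this.2], by linarith [hu.2, this.1]⟩

/-- If `H(t,a) − H(s,a) = ∫_{[s,t)} h(u,a) dμ(u)` for a Radon reference
measure `μ` (finite on compacts, vanishing on `(−∞,0)`), then the two-parameter mollification
`H^{m,n}` admits, in its time variable, the Lebesgue density obtained by mollifying `h dμ`. -/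
theorem stmt2 (μ : Measure ℝ) [IsFiniteMeasureOnCompacts μ] (hμ : μ (Set.Iio 0) = 0)
    (h H : ℝ → ℝ → ℝ)
    (hhmeas : Measurable (Function.uncurry h)) (M : ℝ) (hhbd : ∀ u a, |h u a| ≤ M)
    (hHmeas : Measurable (Function.uncurry H))
    (hHloc : ∀ r : ℝ, 0 < r → ∃ C : ℝ, ∀ a : ℝ, |a| ≤ r → |H 0 a| ≤ C)
    (hdens : ∀ s t a : ℝ, s ≤ t → H t a - H s a = ∫ u in Set.Ico s t, h u a ∂μ)
    (ρ : ℝ → ℝ) (hρ : Continuous ρ) (hρsupp : HasCompactSupport ρ) :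
    ∀ (m n : ℕ) (s t a : ℝ), 0 ≤ s → s ≤ t →
      (∫ q, ∫ r, (m:ℝ) * (n:ℝ) * H r q * ρ ((m:ℝ) * (t - r)) * ρ ((n:ℝ) * (a - q)))
        - (∫ q, ∫ r, (m:ℝ) * (n:ℝ) * H r q * ρ ((m:ℝ) * (s - r)) * ρ ((n:ℝ) * (a - q)))
      = ∫ u in s..t,
          (∫ q, ∫ r, (m:ℝ) * (n:ℝ) * h r q * ρ ((m:ℝ) * (u - r)) * ρ ((n:ℝ) * (a - q)) ∂μ) := by
  intro m n s t a hs hst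
  rcases Nat.eq_zero_or_pos m with rfl | hm
  · simp
  rcases Nat.eq_zero_or_pos n with rfl | hn
  · simp
  have hm1 : (1:ℝ) ≤ m := by exact_mod_cast hm
  have hn1 : (1:ℝ) ≤ n := by exact_mod_cast hn
  obtain ⟨B, hB⟩ := hρsupp.exists_bound_of_continuous hρ
  obtain ⟨R, hR0, hR⟩ : ∃ R : ℝ, 0 < R ∧ ∀ x, R < |x| → ρ x = 0 := by
    obtain ⟨R, hR0, hR⟩ := hρsupp.exists_pos_le_norm
    exact ⟨R, hR0, fun x hx => hR x hx.le⟩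
  have hB' : ∀ x, |ρ x| ≤ B := hB
  have hB0 : 0 ≤ B := (abs_nonneg _).trans (hB' 0)
  have hM : 0 ≤ M := (abs_nonneg _).trans (hhbd 0 0)
  have scale : ∀ (k : ℝ), 1 ≤ k → ∀ x, R < |x| → ρ (k * x) = 0 := by
    intro k hk x hx
    apply hR
    rw [abs_mul, abs_of_nonneg (by linarith : 0 ≤ k)]
    nlinarith [abs_nonneg x]
  have hρm := hρ.measurable
  have hFi : ∀ t : ℝ, Integrable (fun p : ℝ × ℝ =>
      (m:ℝ) * (n:ℝ) * H p.2 p.1 * ρ ((m:ℝ) * (t - p.2)) * ρ ((n:ℝ) * (a - p.1)))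
      (volume.prod volume) := by
    intro t
    obtain ⟨C, hC⟩ := hHloc (|a| + R) (by positivity)
    have hHm : Measurable (fun p : ℝ × ℝ => H p.2 p.1) := hHmeas.comp measurable_swap
    refine aux_int _ _ (by fun_prop) (Icc (a - R) (a + R) ×ˢ Icc (t - R) (t + R)) ?_
      (m * n * (C + M * μ.real (Icc (-(|t|+R)) (|t|+R))) * B * B) ?_ ?_
    · rw [Measure.prod_prod]
      exact ENNReal.mul_lt_top isCompact_Icc.measure_lt_top isCompact_Icc.measure_lt_top
    · rintro ⟨q, r⟩ ⟨hq, hr⟩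
      simp only [mem_Icc] at hq hr ⊢
      have hq' : |q| ≤ |a| + R := by
        rw [abs_le]; constructor <;> linarith [neg_abs_le a, le_abs_self a]
      have hr' : |r| ≤ |t| + R := by
        rw [abs_le]; constructor <;> linarith [neg_abs_le t, le_abs_self t]
      have h1 := aux_bdd μ (fun r => h r q) (fun r => H r q) M (fun r => hhbd r q)
        (fun s t => hdens s t q) (|t| + R) r hr'
      have h2 := hC q hq'
      have h3 : |H r q| ≤ C + M * μ.real (Icc (-(|t|+R)) (|t|+R)) := by linarith
      have h4 := (abs_nonneg _).trans h3
      rw [abs_mul, abs_mul, abs_mul, abs_of_nonneg (by positivity : (0:ℝ) ≤ m * n)]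
      gcongr
      · exact hB' _
      · exact hB' _
    · rintro ⟨q, r⟩ hx
      by_cases hq : R < |a - q|
      · simp [scale n hn1 _ hq]
      by_cases hr : R < |t - r|
      · simp [scale m hm1 _ hr]
      have h1 := abs_le.1 (not_lt.1 hq)
      have h2 := abs_le.1 (not_lt.1 hr)
      exact (hx ⟨⟨by linarith, by linarith⟩, ⟨by linarith, by linarith⟩⟩).elim
  have hGi : Integrable (fun p : (ℝ × ℝ) × ℝ =>
      (m:ℝ) * (n:ℝ) * h p.2 p.1.1 * ρ ((m:ℝ) * (p.1.2 - p.2)) * ρ ((n:ℝ) * (a - p.1.1)))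
      ((volume.prod (volume.restrict (Ioc s t))).prod μ) := by
    have hhm : Measurable (fun p : (ℝ × ℝ) × ℝ => h p.2 p.1.1) :=
      hhmeas.comp (f := fun p : (ℝ × ℝ) × ℝ => (p.2, p.1.1)) (by fun_prop)
    have := aux_intOn ((volume.prod volume).prod μ) (fun p : (ℝ × ℝ) × ℝ =>
      (m:ℝ) * (n:ℝ) * h p.2 p.1.1 * ρ ((m:ℝ) * (p.1.2 - p.2)) * ρ ((n:ℝ) * (a - p.1.1)))
      (by fun_prop) ((Icc (a - R) (a + R) ×ˢ Ioc s t) ×ˢ Icc (s - R) (t + R))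
      ((univ ×ˢ Ioc s t) ×ˢ univ)
      ((MeasurableSet.univ.prod measurableSet_Ioc).prod MeasurableSet.univ)
      ?_ (m * n * M * B * B) ?_ ?_
    · rw [IntegrableOn, ← Measure.prod_restrict, ← Measure.prod_restrict, Measure.restrict_univ,
        Measure.restrict_univ] at this
      exact this
    · rw [Measure.prod_prod, Measure.prod_prod]
      exact ENNReal.mul_lt_top (ENNReal.mul_lt_top isCompact_Icc.measure_lt_top
        measure_Ioc_lt_top) isCompact_Icc.measure_lt_top
    · rintro ⟨⟨q, u⟩, r⟩
      simp only
      rw [abs_mul, abs_mul, abs_mul, abs_of_nonneg (by positivity : (0:ℝ) ≤ m * n)]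
      gcongr
      · exact hhbd _ _
      · exact hB' _
      · exact hB' _
    · rintro ⟨⟨q, u⟩, r⟩ ⟨⟨-, hu⟩, -⟩ hx
      simp only at hu
      by_cases hq : R < |a - q|
      · simp [scale n hn1 _ hq]
      by_cases hr : R < |u - r|
      · simp [scale m hm1 _ hr]
      have h1 := abs_le.1 (not_lt.1 hq)
      have h2 := abs_le.1 (not_lt.1 hr)
      exact (hx ⟨⟨⟨by linarith, by linarith⟩, hu⟩,
        ⟨by linarith [hu.1], by linarith [hu.2]⟩⟩).elim
  rw [← MeasureTheory.integral_sub (hFi t).integral_prod_left (hFi s).integral_prod_left,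
    intervalIntegral.integral_of_le hst]
  rw [← integral_integral_swap (f := fun q u => ∫ r, (m:ℝ) * (n:ℝ) * h r q
    * ρ ((m:ℝ) * (u - r)) * ρ ((n:ℝ) * (a - q)) ∂μ) hGi.integral_prod_left]
  congr 1
  ext q
  have key := aux_one μ (fun r => h r q) (fun r => H r q) M
    (hhmeas.comp (f := fun r : ℝ => (r, q)) (by fun_prop))
    (hHmeas.comp (f := fun r : ℝ => (r, q)) (by fun_prop)) (fun r => hhbd r q)
    (fun s t => hdens s t q) (fun x => m * n * ρ (m * x) * ρ (n * (a - q))) (by fun_prop)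
    (m * n * B * B) R
    (fun x => by
      rw [abs_mul, abs_mul, abs_of_nonneg (by positivity : (0:ℝ) ≤ m * n)]
      gcongr
      · exact hB' _
      · exact hB' _)
    (fun x hx => by simp [scale m hm1 x hx]) s t hst
  rw [intervalIntegral.integral_of_le hst] at key
  convert key using 1
  · congr 1 <;> (congr 1; ext r; ring)
  · congr 1; ext u; congr 1; ext r; ring
end

section
/- Let ν be a finite Borel measure on ℝ, M ≥ 0, κ ∈ [0,1/2), and let h : [0,∞) × ℝ → ℝ be Borel measurable with |h(t,z)| ≤ M and |h(t,z)·ν({z})| ≤ κ for all (t,z). Let A = {z ∈ ℝ : ν({z}) > 0} (a countable set), let ν^c be the restriction of ν to the complement of A, and define ζ(t,x) = ∫_{(−∞,x)} h(t,z) dν^c(z), ψ(t,x) = ∏_{z ∈ A, z < x} (1 − h(t,z)ν({z})), and F_x(t,a) = e^{ζ(t,a)} ψ(t,a). Then for each fixed t ≥ 0: the function x ↦ ζ(t,x) is continuous; the function a ↦ F_x(t,a) is left-continuous and has right limits everywhere; and for every a ∈ ℝ, lim_{b ↓ a} F_x(t,b) = F_x(t,a)·(1 − h(t,a)ν({a})).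 -/
open MeasureTheory Set Filter Topology
open scoped ENNReal

/-- One-sided regularity of the space-derivative `F_x(t,a) = e^{ζ(t,a)} ψ(t,a)`
of the transformation of Section 7: `ζ(t,·)` is continuous, `F_x(t,·)` is left-continuous
with right limits everywhere, and at each point `a` the right limit equals
`F_x(t,a)·(1 − h(t,a)ν({a}))`. -/
theorem stmt7 (ν : Measure ℝ) [IsFiniteMeasure ν]
    (M κ : ℝ) (hM : 0 ≤ M) (hκ0 : 0 ≤ κ) (hκ : κ < 1 / 2)
    (h : ℝ → ℝ → ℝ) (hmeas : Measurable (Function.uncurry h))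
    (hbd : ∀ t z, 0 ≤ t → |h t z| ≤ M)
    (hatom : ∀ t z, 0 ≤ t → |h t z * (ν {z}).toReal| ≤ κ)
    (ζ ψ Fx : ℝ → ℝ → ℝ)
    (hζ : ∀ t x, ζ t x = ∫ z in Set.Iio x, h t z ∂(ν.restrict {z : ℝ | ν {z} = 0}))
    (hψ : ∀ t x, ψ t x =
      ∏' z : {z : ℝ // 0 < ν {z} ∧ z < x}, (1 - h t (z : ℝ) * (ν {(z : ℝ)}).toReal))
    (hFx : ∀ t a, Fx t a = Real.exp (ζ t a) * ψ t a) :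
    ∀ t : ℝ, 0 ≤ t →
      Continuous (ζ t) ∧
      (∀ a : ℝ, Tendsto (Fx t) (nhdsWithin a (Set.Iio a)) (𝓝 (Fx t a))) ∧
      (∀ a : ℝ, ∃ l : ℝ, Tendsto (Fx t) (nhdsWithin a (Set.Ioi a)) (𝓝 l)) ∧
      (∀ a : ℝ, Tendsto (Fx t) (nhdsWithin a (Set.Ioi a))
        (𝓝 (Fx t a * (1 - h t a * (ν {a}).toReal)))) := by
  intro t ht
  have hζc : Continuous (ζ t) := by
    have hA : {z : ℝ | 0 < ν {z}}.Countable :=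
      Measure.countable_meas_pos_of_disjoint_iUnion (fun z => measurableSet_singleton z)
        (fun i j hij => by simpa [Function.onFun] using hij)
    have hAm : MeasurableSet {z : ℝ | ν {z} = 0} := by
      have : {z : ℝ | ν {z} = 0} = {z : ℝ | 0 < ν {z}}ᶜ := by
        ext z; simp
      rw [this]; exact hA.measurableSet.compl
    have hna : ∀ x : ℝ, (ν.restrict {z : ℝ | ν {z} = 0}) {x} = 0 := by
      intro x
      rw [Measure.restrict_apply (measurableSet_singleton x)]
      by_cases hx : ν {x} = 0
      · exact measure_mono_null inter_subset_left hx
      · have : ({x} : Set ℝ) ∩ {z : ℝ | ν {z} = 0} = ∅ := by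
          ext z
          simp only [mem_inter_iff, mem_singleton_iff, mem_setOf_eq, mem_empty_iff_false, iff_false]
          rintro ⟨rfl, h0⟩; exact hx h0
        rw [this, measure_empty]
    have hm : Measurable (h t) := hmeas.comp measurable_prodMk_left
    have e : ζ t = fun x => ∫ z, (Set.Iio x).indicator (h t) z ∂(ν.restrict {z : ℝ | ν {z} = 0}) := by
      funext x
      rw [hζ, integral_indicator measurableSet_Iio]
    rw [e, continuous_iff_continuousAt]
    intro x
    apply continuousAt_of_dominated (bound := fun _ => M)
    · exact Eventually.of_forall fun y => (hm.indicator measurableSet_Iio).aestronglyMeasurable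
    · refine Eventually.of_forall fun y => Eventually.of_forall fun z => ?_
      exact (norm_indicator_le_norm_self _ _).trans (hbd t z ht)
    · exact integrable_const M
    · have : ∀ᵐ z ∂(ν.restrict {z : ℝ | ν {z} = 0}), z ≠ x := by
        rw [ae_iff]; simpa using hna x
      filter_upwards [this] with z hz
      rcases lt_or_gt_of_ne hz with hlt | hgt
      · refine (continuousAt_const (y := h t z)).congr ?_
        filter_upwards [lt_mem_nhds hlt] with y hy
        simp [indicator, hy]
      · refine (continuousAt_const (y := (0:ℝ))).congr ?_
        filter_upwards [gt_mem_nhds hgt] with y hy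
        simp [indicator, hy.le]
  have hsν : Summable fun z : ℝ => (ν {z}).toReal := by
    apply ENNReal.summable_toReal
    refine ne_top_of_le_ne_top (measure_ne_top ν (⋃ z : ℝ, {z})) ?_
    exact tsum_meas_le_meas_iUnion_of_disjoint ν (fun z => measurableSet_singleton z)
        (fun i j hij => by simpa [Function.onFun] using hij)
  have hs : Summable fun z : ℝ => -(h t z * (ν {z}).toReal) := by
    refine Summable.of_norm_bounded (hsν.mul_left M) fun z => ?_
    rw [norm_neg, norm_mul, Real.norm_of_nonneg (r := (ν {z}).toReal) ENNReal.toReal_nonneg]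
    exact mul_le_mul_of_nonneg_right (hbd t z ht) ENNReal.toReal_nonneg
  set u : ℝ → ℝ := fun z => Real.log (1 - h t z * (ν {z}).toReal) with hu
  have hpos : ∀ z, 0 < 1 - h t z * (ν {z}).toReal := fun z => by
    have := (abs_le.1 (hatom t z ht)).2
    linarith
  have hsu : Summable u := by
    simpa [hu, sub_eq_add_neg] using Real.summable_log_one_add_of_summable hs
  have hψ' : ∀ x, ψ t x = Real.exp (∑' z, (Set.Iio x).indicator u z) := by
    intro x
    rw [hψ]
    have h1 := Real.rexp_tsum_eq_tprod
      (f := fun z : {z : ℝ // 0 < ν {z} ∧ z < x} => 1 - h t (z : ℝ) * (ν {(z : ℝ)}).toReal)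
      (fun z => hpos z) (hsu.subtype {z : ℝ | 0 < ν {z} ∧ z < x})
    rw [← h1]
    congr 1
    have h2 := tsum_subtype {z : ℝ | 0 < ν {z} ∧ z < x} u
    refine h2.trans (tsum_congr fun z => ?_)
    by_cases hz : ν {z} = 0
    · simp [indicator, hu, hz]
    · simp [indicator, pos_iff_ne_zero, hz]
  have key : ∀ (l : Filter ℝ) (B : Set ℝ), (∀ z, ∀ᶠ b in l, (z < b ↔ z ∈ B)) →
      Tendsto (ψ t) l (𝓝 (Real.exp (∑' z, B.indicator u z))) := by
    intro l B hB
    have e : ψ t = fun x => Real.exp (∑' z, (Set.Iio x).indicator u z) := funext hψ'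
    rw [e]
    refine (Real.continuous_exp.tendsto _).comp ?_
    refine tendsto_tsum_of_dominated_convergence hsu.norm (fun z => ?_)
      (Eventually.of_forall fun b z => norm_indicator_le_norm_self _ _)
    refine tendsto_const_nhds.congr' ?_
    filter_upwards [hB z] with b hb
    by_cases hz : z ∈ B
    · rw [indicator_of_mem hz, indicator_of_mem (mem_Iio.2 (hb.2 hz))]
    · rw [indicator_of_notMem hz, indicator_of_notMem (fun hh : z ∈ Iio b => hz (hb.1 (mem_Iio.1 hh)))]
  have eF : Fx t = fun a => Real.exp (ζ t a) * ψ t a := funext (hFx t)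
  have hexp : ∀ (a : ℝ) (s : Set ℝ),
      Tendsto (fun b => Real.exp (ζ t b)) (𝓝[s] a) (𝓝 (Real.exp (ζ t a))) := fun a s =>
    ((Real.continuous_exp.comp hζc).tendsto a).mono_left nhdsWithin_le_nhds
  have hR : ∀ a : ℝ, Tendsto (Fx t) (nhdsWithin a (Set.Ioi a))
        (𝓝 (Fx t a * (1 - h t a * (ν {a}).toReal))) := by
    intro a
    have h1 := key (𝓝[>] a) (Iic a) (fun z => by
      rcases le_or_gt z a with hz | hz
      · filter_upwards [self_mem_nhdsWithin] with b hb
        exact ⟨fun _ => hz, fun _ => lt_of_le_of_lt hz hb⟩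
      · filter_upwards [mem_nhdsWithin_of_mem_nhds (gt_mem_nhds hz)] with b hb
        exact ⟨fun hh => absurd hh (not_lt.2 (le_of_lt hb)), fun hh => absurd hz (not_lt.2 hh)⟩)
    have h2 : Real.exp (∑' z, (Iic a).indicator u z) = ψ t a * (1 - h t a * (ν {a}).toReal) := by
      have h3 : ∀ z, (Iic a).indicator u z = (Iio a).indicator u z + ({a} : Set ℝ).indicator u z := by
        intro z
        rcases lt_trichotomy z a with hz | hz | hz
        · simp [indicator, hz, hz.le, hz.ne]
        · simp [indicator, hz]
        · simp [indicator, not_le.2 hz, not_lt.2 hz.le, hz.ne']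
      rw [tsum_congr h3, (hsu.indicator _).tsum_add (hsu.indicator _), Real.exp_add, ← hψ',
        ← tsum_subtype {a} u, tsum_singleton a u, hu, Real.exp_log (hpos a)]
    rw [h2] at h1
    rw [eF]
    simpa [mul_assoc] using (hexp a _).mul h1
  refine ⟨hζc, fun a => ?_, fun a => ⟨_, hR a⟩, hR⟩
  have h1 := key (𝓝[<] a) (Iio a) (fun z => by
    rcases lt_or_ge z a with hz | hz
    · filter_upwards [mem_nhdsWithin_of_mem_nhds (lt_mem_nhds hz)] with b hb
      exact ⟨fun _ => hz, fun _ => hb⟩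
    · filter_upwards [self_mem_nhdsWithin] with b hb
      exact ⟨fun hh => hh.trans hb, fun hh => absurd hh (not_lt.2 hz)⟩)
  rw [← hψ'] at h1
  rw [eF]
  exact (hexp a _).mul h1
end

section
/- Let σ, g : [0,∞) × ℝ → ℝ be functions and C₁, C₂ ≥ 0 constants with |σ(t,x)| ≤ C₁ and |g(t,x)| ≤ C₂ for all (t,x). Suppose there exist nondecreasing functions ρ, w : ℝ → ℝ such that for all t ≥ 0 and all x ≤ y, (σ(t,y) − σ(t,x))² ≤ ρ(y) − ρ(x) and |g(t,y) − g(t,x)| ≤ w(y) − w(x). Then there exists a nondecreasing function ρ̃ : ℝ → ℝ (for instance ρ̃ = 2C₂²·ρ + 4C₁²C₂·w) such that for all t ≥ 0 and all x ≤ y, ((g·σ)(t,y) − (g·σ)(t,x))² ≤ ρ̃(y) − ρ̃(x), where (g·σ)(t,x) = g(t,x)·σ(t,x). -/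
/-- The Nakao-type condition is preserved when multiplying a coefficient `σ`
by a bounded function `g` whose spatial variation is controlled by a nondecreasing `w`. -/
theorem stmt9 (σ g : ℝ → ℝ → ℝ) (C₁ C₂ : ℝ) (hC₁ : 0 ≤ C₁) (hC₂ : 0 ≤ C₂)
    (hσbd : ∀ t x, 0 ≤ t → |σ t x| ≤ C₁)
    (hgbd : ∀ t x, 0 ≤ t → |g t x| ≤ C₂)
    (ρ w : ℝ → ℝ) (hρ : Monotone ρ) (hw : Monotone w)
    (hσ : ∀ t x y, 0 ≤ t → x ≤ y → (σ t y - σ t x) ^ 2 ≤ ρ y - ρ x)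
    (hg : ∀ t x y, 0 ≤ t → x ≤ y → |g t y - g t x| ≤ w y - w x) :
    ∃ ρt : ℝ → ℝ, Monotone ρt ∧
      ∀ t x y, 0 ≤ t → x ≤ y →
        (g t y * σ t y - g t x * σ t x) ^ 2 ≤ ρt y - ρt x := by
  refine ⟨fun z => 2 * C₂ ^ 2 * ρ z + 4 * C₁ ^ 2 * C₂ * w z, ?_, ?_⟩
  · intro x y hxy
    have h1 := hρ hxy
    have h2 := hw hxy
    show 2 * C₂ ^ 2 * ρ x + 4 * C₁ ^ 2 * C₂ * w x ≤ 2 * C₂ ^ 2 * ρ y + 4 * C₁ ^ 2 * C₂ * w y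
    gcongr
  · intro t x y ht hxy
    have h1 := hσ t x y ht hxy
    have h2 := hg t x y ht hxy
    have h3 : g t y ^ 2 ≤ C₂ ^ 2 := sq_le_sq' (abs_le.mp (hgbd t y ht)).1 (abs_le.mp (hgbd t y ht)).2
    have h4 : σ t x ^ 2 ≤ C₁ ^ 2 := sq_le_sq' (abs_le.mp (hσbd t x ht)).1 (abs_le.mp (hσbd t x ht)).2
    have h5 : |g t y - g t x| ≤ 2 * C₂ := by
      have := abs_sub (g t y) (g t x)
      linarith [hgbd t x ht, hgbd t y ht]
    have h6 : (g t y - g t x) ^ 2 ≤ 2 * C₂ * (w y - w x) := by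
      rw [← sq_abs, sq]
      exact mul_le_mul h5 h2 (abs_nonneg _) (by positivity)
    have h7 := mul_le_mul h3 h1 (sq_nonneg _) (sq_nonneg _)
    have h8 := mul_le_mul h4 h6 (sq_nonneg _) (sq_nonneg _)
    have h9 := sq_nonneg (g t y * (σ t y - σ t x) - σ t x * (g t y - g t x))
    show _ ≤ (2 * C₂ ^ 2 * ρ y + 4 * C₁ ^ 2 * C₂ * w y) - (2 * C₂ ^ 2 * ρ x + 4 * C₁ ^ 2 * C₂ * w x)
    linarith
end

section
/- Let f : ℝ → ℝ be a Borel function and 0 < c ≤ C < ∞ constants with c ≤ f(x) ≤ C for all x. Define F(x) = ∫_0^x f(a) da. Then F is a strictly increasing bijection of ℝ onto ℝ satisfying c·(y−x) ≤ F(y) − F(x) ≤ C·(y−x) for x ≤ y, and its inverse G = F^{-1} satisfies G(y) = ∫_0^y (1 / f(G(a))) da for every y ∈ ℝ. -/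
open MeasureTheory intervalIntegral

/-- For a Borel `f` with `c ≤ f ≤ C` (`0 < c`), the function
`F(x) = ∫_0^x f(a) da` is a strictly increasing bi-Lipschitz bijection of `ℝ` onto `ℝ`,
and its inverse `G` satisfies `G(y) = ∫_0^y 1 / f(G(a)) da`. -/
theorem stmt10 (f : ℝ → ℝ) (hfmeas : Measurable f)
    (c C : ℝ) (hc : 0 < c) (hcC : c ≤ C)
    (hfc : ∀ x, c ≤ f x) (hfC : ∀ x, f x ≤ C)
    (F : ℝ → ℝ) (hF : ∀ x, F x = ∫ a in (0:ℝ)..x, f a) :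
    StrictMono F ∧ Function.Bijective F ∧
      (∀ x y, x ≤ y → c * (y - x) ≤ F y - F x ∧ F y - F x ≤ C * (y - x)) ∧
      ∃ G : ℝ → ℝ, Function.LeftInverse G F ∧ Function.RightInverse G F ∧
        ∀ y, G y = ∫ a in (0:ℝ)..y, 1 / f (G a) := by
  have hloc : LocallyIntegrable f volume := by
    refine (MeasureTheory.locallyIntegrable_const C).mono hfmeas.aestronglyMeasurable ?_
    refine Filter.Eventually.of_forall fun x => ?_
    rw [Real.norm_eq_abs, Real.norm_eq_abs, abs_of_pos (hc.trans_le (hfc x)),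
      abs_of_pos (hc.trans_le hcC)]
    exact hfC x
  have hint : ∀ a b, IntervalIntegrable f volume a b := fun a b => by
    rw [intervalIntegrable_iff]
    exact (hloc.integrableOn_isCompact isCompact_uIcc).mono_set Set.uIoc_subset_uIcc
  have hbd : ∀ x y, x ≤ y → c * (y - x) ≤ F y - F x ∧ F y - F x ≤ C * (y - x) := by
    intro x y hxy
    rw [hF, hF, intervalIntegral.integral_interval_sub_left (hint _ _) (hint _ _)]
    have h1 := intervalIntegral.integral_mono_on hxy (_root_.intervalIntegrable_const (c := c))
      (hint x y) (fun t _ => hfc t)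
    have h2 := intervalIntegral.integral_mono_on hxy (hint x y)
      (_root_.intervalIntegrable_const (c := C)) (fun t _ => hfC t)
    simp only [intervalIntegral.integral_const, smul_eq_mul] at h1 h2
    constructor <;> linarith
  have hmono : StrictMono F := by
    intro x y hxy
    have := (hbd x y hxy.le).1
    have := mul_pos hc (sub_pos.2 hxy)
    linarith
  have hF0 : F 0 = 0 := by rw [hF]; simp
  have hLip : LipschitzWith C.toNNReal F := by
    refine LipschitzWith.of_dist_le_mul fun x y => ?_
    rw [Real.coe_toNNReal _ (hc.trans_le hcC).le, Real.dist_eq, Real.dist_eq]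
    rcases le_total x y with h | h
    · rw [abs_sub_comm, abs_of_nonneg (sub_nonneg.2 (hmono.monotone h)), abs_sub_comm,
        abs_of_nonneg (sub_nonneg.2 h)]
      exact (hbd _ _ h).2
    · rw [abs_of_nonneg (sub_nonneg.2 (hmono.monotone h)),
        abs_of_nonneg (sub_nonneg.2 h)]
      exact (hbd _ _ h).2
  have hsurj : Function.Surjective F := by
    refine hLip.continuous.surjective ?_ ?_
    · refine Filter.tendsto_atTop_mono' _ ?_ (Filter.tendsto_id.const_mul_atTop hc)
      filter_upwards [Filter.eventually_ge_atTop 0] with x hx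
      have := (hbd 0 x hx).1
      simp only [id]; linarith
    · refine Filter.tendsto_atBot_mono' _ ?_ (Filter.tendsto_id.const_mul_atBot hc)
      filter_upwards [Filter.eventually_le_atBot 0] with x hx
      have := (hbd x 0 hx).1
      simp only [id]; linarith
  refine ⟨hmono, ⟨hmono.injective, hsurj⟩, hbd, ?_⟩
  obtain ⟨G, hGr⟩ := hsurj.hasRightInverse
  have hGl : Function.LeftInverse G F := fun x => hmono.injective (hGr (F x))
  refine ⟨G, hGl, hGr, fun y => ?_⟩
  have hGmono : Monotone G := fun a b hab => by
    rw [← hmono.le_iff_le, hGr, hGr]; exact hab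
  have hGLip : LipschitzWith (c⁻¹).toNNReal G := by
    refine LipschitzWith.of_dist_le_mul fun x y => ?_
    rw [Real.coe_toNNReal _ (inv_pos.2 hc).le, Real.dist_eq, Real.dist_eq, ← div_eq_inv_mul,
      le_div_iff₀' hc]
    rcases le_total x y with h | h
    · rw [abs_sub_comm, abs_of_nonneg (sub_nonneg.2 (hGmono h)), abs_sub_comm,
        abs_of_nonneg (sub_nonneg.2 h)]
      have := (hbd _ _ (hGmono h)).1
      rwa [hGr, hGr] at this
    · rw [abs_of_nonneg (sub_nonneg.2 (hGmono h)),
        abs_of_nonneg (sub_nonneg.2 h)]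
      have := (hbd _ _ (hGmono h)).1
      rwa [hGr, hGr] at this
  have hae : ∀ᵐ x, HasDerivAt F (f x) x := by
    have hFe : F = fun x => ∫ a in (0:ℝ)..x, f a := funext hF
    filter_upwards [_root_.LocallyIntegrable.ae_hasDerivAt_integral hloc] with x hx
    rw [hFe]; exact hx 0
  have hae2 : ∀ᵐ a, HasDerivAt F (f (G a)) (G a) := by
    rw [ae_iff] at hae ⊢
    have h1 := hLip.lipschitzOnWith.hausdorffMeasure_image_le (d := 1) zero_le_one
      (s := {a | ¬ HasDerivAt F (f a) a})
    rw [hausdorffMeasure_real, hae, mul_zero] at h1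
    refine measure_mono_null ?_ (le_antisymm h1 zero_le)
    intro a ha
    exact ⟨G a, ha, hGr a⟩
  have hG0 : G 0 = 0 := by rw [← hF0, hGl]; exact hF0.symm
  have hac := (hGLip.lipschitzOnWith (s := Set.uIcc 0 y)).absolutelyContinuousOnInterval
  have := hac.integral_deriv_eq_sub
  rw [hG0, sub_zero] at this
  rw [← this]
  refine intervalIntegral.integral_congr_ae ?_
  filter_upwards [hae2] with a ha _
  rw [one_div]
  exact (ha.of_local_left_inverse hGLip.continuous.continuousAt (hc.trans_le (hfc _)).ne'
    (Filter.Eventually.of_forall hGr)).deriv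
end
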